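/- Let ι be an index type, y : ι → ℤ a labeling by integers, ε > 0 and ε⁺ ≥ 0 real numbers. Let E be a nontrivial real inner product space (e.g. Euclidean space ℝ^D with D ≥ 1). Then there exists an embedding x : ι → E such that for all i, j: y i = y j implies ‖x i − x j‖ ≤ ε⁺ and y i ≠ y j implies ‖x i − x j‖ ≥ ((ε⁺)² + ε)^{1/2}; in particular, for every nonempty finite set T of triplets (i, j⁺, j⁻) with y i = y j⁺ and y i ≠ y j⁻, the averaged triplet loss attains its global minimum value 0 at x. -/

import Mathlib

/-- The triplet loss term with margin ε. -/
noncomputable def tripletLossTerm {E : Type*} [NormedAddCommGroup E] [InnerProductSpace ℝ E]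
    {ι : Type*} (ε : ℝ) (x : ι → E) (i jp jn : ι) : ℝ :=
  max (‖x i - x jp‖ ^ 2 - ‖x i - x jn‖ ^ 2 + ε) 0

/-- The averaged triplet loss over a finite set of triplets. -/
noncomputable def tripletLoss {E : Type*} [NormedAddCommGroup E] [InnerProductSpace ℝ E]
    {ι : Type*} (ε : ℝ) (T : Finset (ι × ι × ι)) (x : ι → E) : ℝ :=
  (1 / (T.card : ℝ)) * ∑ t ∈ T, tripletLossTerm ε x t.1 t.2.1 t.2.2

/-!
All samples carrying a given label are sent to one point, so positive pairs are at distance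
`0 ≤ εp`. Points for distinct labels are picked greedily, each at squared distance at least
`εp ^ 2 + ε` from the earlier ones, which is possible because a nontrivial real normed space is
unbounded. Every valid triplet then satisfies the margin `ε`, so the loss, which is never negative,
vanishes.
-/

theorem exists_pairwise_le_dist_of_not_isBounded {X : Type*} [PseudoMetricSpace X]
    (hX : ¬ Bornology.IsBounded (Set.univ : Set X)) (α : Type*) [Countable α] (r : ℝ) :
    ∃ f : α → X, Pairwise fun a b ↦ r ≤ dist (f a) (f b) := by
  have exists_far (s : Finset X) : ∃ z, ∀ w ∈ s, r ≤ dist w z := by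
    by_contra! h
    refine hX (((Bornology.isBounded_biUnion_finset s).2 fun w _ ↦
      Metric.isBounded_ball (x := w) (r := r)).subset fun z _ ↦ ?_)
    obtain ⟨w, hw, hwz⟩ := h z
    exact Set.mem_biUnion hw (Metric.mem_ball'.2 hwz)
  have : Std.Symm fun w z : X ↦ r ≤ dist w z := ⟨fun w z h ↦ dist_comm w z ▸ h⟩
  obtain ⟨u, -, hu⟩ := exists_seq_of_forall_finset_exists' (fun _ : X ↦ True)
    (fun w z ↦ r ≤ dist w z) fun s _ ↦ (exists_far s).imp fun _ hz ↦ ⟨trivial, hz⟩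
  obtain ⟨g, hg⟩ := exists_injective_nat α
  exact ⟨u ∘ g, hu.comp_of_injective hg⟩

section TripletLoss

variable {E : Type*} [NormedAddCommGroup E] [InnerProductSpace ℝ E] {ι : Type*}

theorem tripletLossTerm_nonneg (ε : ℝ) (x : ι → E) (i jp jn : ι) :
    0 ≤ tripletLossTerm ε x i jp jn :=
  le_max_right _ _

theorem tripletLossTerm_eq_zero_iff {ε : ℝ} {x : ι → E} {i jp jn : ι} :
    tripletLossTerm ε x i jp jn = 0 ↔ ‖x i - x jp‖ ^ 2 + ε ≤ ‖x i - x jn‖ ^ 2 := by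
  rw [tripletLossTerm, max_eq_right_iff]
  constructor <;> intro h <;> linarith

theorem tripletLoss_nonneg (ε : ℝ) (T : Finset (ι × ι × ι)) (x : ι → E) :
    0 ≤ tripletLoss ε T x :=
  mul_nonneg (by positivity) (Finset.sum_nonneg fun _ _ ↦ tripletLossTerm_nonneg _ _ _ _ _)

theorem tripletLoss_eq_zero {ε : ℝ} {T : Finset (ι × ι × ι)} {x : ι → E}
    (h : ∀ t ∈ T, ‖x t.1 - x t.2.1‖ ^ 2 + ε ≤ ‖x t.1 - x t.2.2‖ ^ 2) :
    tripletLoss ε T x = 0 := by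
  rw [tripletLoss, Finset.sum_eq_zero fun t ht ↦ tripletLossTerm_eq_zero_iff.2 (h t ht), mul_zero]

end TripletLoss

theorem exists_triplet_feasible_embedding_general
    {E : Type*} [NormedAddCommGroup E] [InnerProductSpace ℝ E] [Nontrivial E]
    {ι α : Type*} [Countable α] (y : ι → α) (ε : ℝ) {εp : ℝ} (hεp : 0 ≤ εp) :
    ∃ x : ι → E,
      (∀ i j, y i = y j → ‖x i - x j‖ ≤ εp) ∧
      (∀ i j, y i ≠ y j → εp ^ 2 + ε ≤ ‖x i - x j‖ ^ 2) ∧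
      (∀ T : Finset (ι × ι × ι), T.Nonempty →
        (∀ t ∈ T, y t.1 = y t.2.1 ∧ y t.1 ≠ y t.2.2) →
        tripletLoss ε T x = 0 ∧
        ∀ x' : ι → E, tripletLoss ε T x ≤ tripletLoss ε T x') := by
  obtain ⟨f, hf⟩ := exists_pairwise_le_dist_of_not_isBounded
    (NormedSpace.unbounded_univ ℝ E) α √(εp ^ 2 + ε)
  have hpos (i j : ι) (hij : y i = y j) : ‖f (y i) - f (y j)‖ ≤ εp := by
    rwa [hij, sub_self, norm_zero]
  have hneg (i j : ι) (hij : y i ≠ y j) : εp ^ 2 + ε ≤ ‖f (y i) - f (y j)‖ ^ 2 :=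
    dist_eq_norm (f (y i)) (f (y j)) ▸ (Real.sqrt_le_iff.1 (hf hij)).2
  refine ⟨f ∘ y, hpos, hneg, fun T _ hT ↦ ?_⟩
  have hzero : tripletLoss ε T (f ∘ y) = 0 := tripletLoss_eq_zero fun t ht ↦
    calc ‖f (y t.1) - f (y t.2.1)‖ ^ 2 + ε
      _ ≤ εp ^ 2 + ε := by gcongr; exact hpos _ _ (hT t ht).1
      _ ≤ ‖f (y t.1) - f (y t.2.2)‖ ^ 2 := hneg _ _ (hT t ht).2
  exact ⟨hzero, fun x' ↦ hzero.trans_le (tripletLoss_nonneg ε T x')⟩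

/-- For any integer labeling there is an embedding into a
nontrivial real inner product space with positive-pair distances at most ε⁺ and
negative-pair distances at least ((ε⁺)² + ε)^{1/2}; it attains the global
minimum value 0 of the averaged triplet loss for every nonempty valid `T`. -/
theorem exists_triplet_feasible_embedding
    {E : Type*} [NormedAddCommGroup E] [InnerProductSpace ℝ E] [Nontrivial E]
    {ι : Type*} (y : ι → ℤ) (ε εp : ℝ) (hε : 0 < ε) (hεp : 0 ≤ εp) :
    ∃ x : ι → E,
      (∀ i j, y i = y j → ‖x i - x j‖ ≤ εp) ∧
      (∀ i j, y i ≠ y j → (εp ^ 2 + ε) ^ ((1 : ℝ) / 2) ≤ ‖x i - x j‖) ∧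
      (∀ T : Finset (ι × ι × ι), T.Nonempty →
        (∀ t ∈ T, y t.1 = y t.2.1 ∧ y t.1 ≠ y t.2.2) →
        tripletLoss ε T x = 0 ∧
        ∀ x' : ι → E, tripletLoss ε T x ≤ tripletLoss ε T x') := by
  simpa only [← Real.sqrt_eq_rpow, Real.sqrt_le_iff, norm_nonneg, true_and] using
    exists_triplet_feasible_embedding_general y ε hεp
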